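/- Let M_1 and M_2 be monic monomials in S = K[x_1,…,x_n] of the same degree s ≥ 3 with M_1 >_lex M_2, written M_1 = x_{i_1}⋯x_{i_s} and M_2 = x_{j_1}⋯x_{j_s} with i_1 ≤ … ≤ i_s and j_1 ≤ … ≤ j_s. Let t be the unique natural number such that M_1 and M_2 agree in order t (i.e., t = 0 and i_s > j_s, or 1 ≤ t ≤ s−1 with i_l = j_l for s−t+1 ≤ l ≤ s and i_{s−t} ≠ j_{s−t}; in either case i_{s−t} > j_{s−t}). Then for any index l ∈ {1, …, s−t}, the monomial M_3 := (x_{i_{s−t}} / x_{j_l}) · M_2 satisfies: M_3 >_lex M_2; M_3 / gcd(M_3, M_2) is a single variable (namely x_{i_{s−t}}); and M_3 / gcd(M_3, M_2) divides M_1 / gcd(M_1, M_2). -/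

import Mathlib

open MvPolynomial

noncomputable section

/-- The edge ideal of a finite simple graph on vertex set `Fin n`
(vertex with index `v` corresponds to the vertex `v+1` of `[n]`). -/
def edgeIdeal (K : Type*) [Field K] {n : ℕ} (G : SimpleGraph (Fin n)) :
    Ideal (MvPolynomial (Fin n) K) :=
  Ideal.span {p | ∃ i j : Fin n, G.Adj i j ∧ p = X i * X j}

/-- `d` is the exponent vector of a minimal monomial generator of `I`. -/
def IsMinGen {K : Type*} [Field K] {n : ℕ} (I : Ideal (MvPolynomial (Fin n) K))
    (d : Fin n →₀ ℕ) : Prop :=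
  monomial d (1 : K) ∈ I ∧
    ∀ e : Fin n →₀ ℕ, e ≤ d → e ≠ d → monomial e (1 : K) ∉ I

/-- A list of exponent vectors `L = [d_1, …, d_r]` is a linear quotient ordering if
for every `i ≥ 2` the colon ideal `(x^{d_1}, …, x^{d_{i-1}}) : x^{d_i}` is generated
by a subset of the variables. -/
def IsLinQuotOrder (K : Type*) [Field K] {n : ℕ} (L : List (Fin n →₀ ℕ)) : Prop :=
  ∀ i : Fin L.length, 0 < i.val →
    ∃ V : Set (Fin n),
      Submodule.colon
        (Ideal.span {m : MvPolynomial (Fin n) K |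
          ∃ k : Fin L.length, k.val < i.val ∧ m = monomial (L.get k) 1})
        (Ideal.span {monomial (L.get i) (1 : K)}) =
      Ideal.span ((fun v : Fin n => (X v : MvPolynomial (Fin n) K)) '' V)

/-- A monomial ideal has linear quotients if it is principal or admits a
linear quotient ordering of its minimal monomial generators. -/
def HasLinearQuotients {K : Type*} [Field K] {n : ℕ}
    (I : Ideal (MvPolynomial (Fin n) K)) : Prop :=
  (∃ p, I = Ideal.span {p}) ∨
    ∃ L : List (Fin n →₀ ℕ), L.Nodup ∧ (∀ d, d ∈ L ↔ IsMinGen I d) ∧ IsLinQuotOrder K L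

/-- `lexLt d e` : the monomial `x^d` is lexicographically smaller than `x^e`
for the lexicographic order induced by `x_n > x_{n-1} > … > x_1`. -/
def lexLt {n : ℕ} (d e : Fin n →₀ ℕ) : Prop :=
  ∃ k : Fin n, d k < e k ∧ ∀ m : Fin n, k < m → d m = e m

/-- `L` lists the minimal monomial generators of `I` in decreasing lexicographic order. -/
def LexDecMinGenOrder {K : Type*} [Field K] {n : ℕ} (I : Ideal (MvPolynomial (Fin n) K))
    (L : List (Fin n →₀ ℕ)) : Prop :=
  List.Pairwise (fun d e => lexLt e d) L ∧ ∀ d, d ∈ L ↔ IsMinGen I d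

/-- The anticycle on `[m]` : `{i,j}` is an edge iff `i ≠ j` and `i - j ≢ ±1 (mod m)`. -/
def anticycle (m : ℕ) : SimpleGraph (Fin m) where
  Adj i j := i ≠ j ∧ (i.val + 1) % m ≠ j.val ∧ (j.val + 1) % m ≠ i.val
  symm := ⟨fun i j h => ⟨h.1.symm, h.2.2, h.2.1⟩⟩
  loopless := ⟨fun i h => h.1 rfl⟩

/-- The anticycle on `[m]` regarded as a graph on the vertex set `[n]`. -/
def anticycleIn (n m : ℕ) : SimpleGraph (Fin n) where
  Adj i j := i ≠ j ∧ i.val < m ∧ j.val < m ∧ (i.val + 1) % m ≠ j.val ∧ (j.val + 1) % m ≠ i.val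
  symm := ⟨fun i j h => ⟨h.1.symm, h.2.2.1, h.2.1, h.2.2.2.2, h.2.2.2.1⟩⟩
  loopless := ⟨fun i h => h.1 rfl⟩

/-- The star on `[n]` with edges `{i, n}` for `1 ≤ i ≤ n - 3`
(in the `0`-indexed picture: edges `{i, n-1}` for `i ≤ n - 4`). -/
def starF (n : ℕ) : SimpleGraph (Fin n) :=
  SimpleGraph.fromRel (fun i j => i.val + 4 ≤ n ∧ j.val = n - 1)

/-- `AgreeOrder n s i j t` : the degree-`s` monomials with ascending (0-indexed)
index sequences `i` and `j` agree in order `t`. -/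
def AgreeOrder (n s : ℕ) (i j : ℕ → Fin n) (t : ℕ) : Prop :=
  if t = 0 then j (s - 1) < i (s - 1)
  else (∀ l, s - t ≤ l → l ≤ s - 1 → i l = j l) ∧ i (s - t - 1) ≠ j (s - t - 1)

/-!
Above the position `p = s - t` the two ascending index sequences coincide, and up to `p` neither
exceeds its value at `p`. So the larger of the two variables at `p` has a strictly larger exponent
in the monomial it comes from, while all higher variables have equal exponents: the lexicographic
comparison is decided at `p`. As `M₁ > M₂`, this gives `j_l ≤ j_p < i_p`, so exchanging `x_{j_l}`
for `x_{i_p}` increases `M₂`, and `x_{i_p}` divides `M₁ / gcd(M₁, M₂)`.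
-/

theorem lexLt_iff_toColex_lt {n : ℕ} {d e : Fin n →₀ ℕ} : lexLt d e ↔ toColex d < toColex e :=
  (exists_congr fun _ ↦ and_comm).trans Finsupp.Colex.lt_iff.symm

namespace AgreeOrder

variable {n s t : ℕ} {i j : ℕ → Fin n}

theorem ne (h : AgreeOrder n s i j t) : i (s - t - 1) ≠ j (s - t - 1) := by
  unfold AgreeOrder at h
  split_ifs at h with ht
  · subst ht
    exact h.ne'
  · exact h.2

theorem eq_of_lt (h : AgreeOrder n s i j t) {l : ℕ} (hl : s - t - 1 < l) (hls : l < s) :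
    i l = j l := by
  unfold AgreeOrder at h
  split_ifs at h
  · omega
  · exact h.1 l (by omega) (by omega)

end AgreeOrder

section Exchange

variable {σ M : Type*} [AddCommMonoid M] [PartialOrder M] [CanonicallyOrderedAdd M] [Sub M]
  [OrderedSub M] {a b : σ}

theorem single_tsub_single_of_ne (hab : a ≠ b) (m k : M) :
    Finsupp.single a m - Finsupp.single b k = Finsupp.single a m := by
  ext x
  rcases eq_or_ne x b with rfl | hx
  · simp [hab.symm]
  · simp [hx]

theorem add_single_tsub_single_tsub_self [AddLeftReflectLE M] (c : σ →₀ M) (hab : a ≠ b)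
    (m k : M) :
    c + Finsupp.single a m - Finsupp.single b k - c = Finsupp.single a m := by
  rw [tsub_right_comm, add_tsub_cancel_left, single_tsub_single_of_ne hab]

theorem toColex_lt_add_single_tsub_single [LinearOrder σ] [AddLeftStrictMono M] (c : σ →₀ M)
    (hba : b < a) {m : M} (hm : 0 < m) (k : M) :
    toColex c < toColex (c + Finsupp.single a m - Finsupp.single b k) := by
  refine Finsupp.Colex.lt_iff.2 ⟨a, fun x hax ↦ ?_, ?_⟩
  · simp [hax.ne', (hba.trans hax).ne']
  · simpa [hba.ne'] using lt_add_of_pos_right (c a) hm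

end Exchange

/-- The exponent vector of the monomial `∏ k ∈ S, x_{i k}`. The positions `k` of the factors form a
finite subset of an arbitrary type, so `Finset.range s` gives the degree-`s` monomials. -/
def indexExponent {ι σ : Type*} (S : Finset ι) (i : ι → σ) : σ →₀ ℕ :=
  ∑ k ∈ S, Finsupp.single (i k) 1

theorem indexExponent_apply {ι σ : Type*} [DecidableEq σ] (S : Finset ι) (i : ι → σ) (a : σ) :
    indexExponent S i a = (S.filter (i · = a)).card := by
  simp only [indexExponent, Finsupp.finsetSum_apply, Finsupp.single_apply, Finset.card_filter]

section IndexFamilies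

variable {ι σ : Type*} [LinearOrder ι] [LinearOrder σ] {S : Finset ι} {i j : ι → σ} {p q : ι}

theorem indexExponent_apply_lt (hj : MonotoneOn j S) (hp : p ∈ S)
    (hagree : ∀ l ∈ S, p < l → i l = j l) (hlt : j p < i p) :
    indexExponent S j (i p) < indexExponent S i (i p) := by
  simp only [indexExponent_apply]
  refine Finset.card_lt_card (Finset.ssubset_iff_of_subset ?_ |>.2 ⟨p, ?_, ?_⟩)
  · intro k hk
    obtain ⟨hkS, hjk⟩ := Finset.mem_filter.1 hk
    have hpk : p < k := by
      by_contra hnot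
      exact ((hj hkS hp (not_lt.1 hnot)).trans_lt hlt).ne hjk
    exact Finset.mem_filter.2 ⟨hkS, (hagree k hkS hpk).trans hjk⟩
  · simp [hp]
  · simp [hlt.ne]

theorem indexExponent_apply_eq_of_lt (hi : MonotoneOn i S) (hj : MonotoneOn j S) (hp : p ∈ S)
    (hagree : ∀ l ∈ S, p < l → i l = j l) {a : σ} (hia : i p < a) (hja : j p < a) :
    indexExponent S i a = indexExponent S j a := by
  simp only [indexExponent_apply]
  congr 1
  refine Finset.filter_congr fun k hk ↦ ?_
  rcases le_or_gt k p with hkp | hpk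
  · exact iff_of_false ((hi hk hp hkp).trans_lt hia).ne ((hj hk hp hkp).trans_lt hja).ne
  · rw [hagree k hk hpk]

theorem toColex_indexExponent_lt (hi : MonotoneOn i S) (hj : MonotoneOn j S) (hp : p ∈ S)
    (hagree : ∀ l ∈ S, p < l → i l = j l) (hlt : j p < i p) :
    toColex (indexExponent S j) < toColex (indexExponent S i) :=
  Finsupp.Colex.lt_iff.2 ⟨i p,
    fun _ ha ↦ (indexExponent_apply_eq_of_lt hi hj hp hagree ha (hlt.trans ha)).symm,
    indexExponent_apply_lt hj hp hagree hlt⟩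

theorem toColex_indexExponent_lt_iff (hi : MonotoneOn i S) (hj : MonotoneOn j S) (hp : p ∈ S)
    (hagree : ∀ l ∈ S, p < l → i l = j l) (hne : i p ≠ j p) :
    toColex (indexExponent S j) < toColex (indexExponent S i) ↔ j p < i p := by
  refine ⟨fun hlex ↦ ?_, toColex_indexExponent_lt hi hj hp hagree⟩
  by_contra hnot
  have hlt : i p < j p := (not_lt.1 hnot).lt_of_ne hne
  exact hlex.asymm
    (toColex_indexExponent_lt hj hi hp (fun l hl hpl ↦ (hagree l hl hpl).symm) hlt)

theorem lexicographical_projection_general (hi : MonotoneOn i S) (hj : MonotoneOn j S)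
    (hlex : toColex (indexExponent S j) < toColex (indexExponent S i))
    (hp : p ∈ S) (hagree : ∀ l ∈ S, p < l → i l = j l) (hne : i p ≠ j p)
    (hq : q ∈ S) (hqp : q ≤ p) :
    toColex (indexExponent S j) <
        toColex (indexExponent S j + Finsupp.single (i p) 1 - Finsupp.single (j q) 1) ∧
    indexExponent S j + Finsupp.single (i p) 1 - Finsupp.single (j q) 1 - indexExponent S j
      = Finsupp.single (i p) 1 ∧
    indexExponent S j + Finsupp.single (i p) 1 - Finsupp.single (j q) 1 - indexExponent S j
      ≤ indexExponent S i - indexExponent S j := by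
  have hlt : j p < i p := (toColex_indexExponent_lt_iff hi hj hp hagree hne).1 hlex
  have hqlt : j q < i p := (hj hq hp hqp).trans_lt hlt
  have hquot := add_single_tsub_single_tsub_self (indexExponent S j) hqlt.ne' 1 1
  refine ⟨toColex_lt_add_single_tsub_single _ hqlt one_pos 1, hquot, ?_⟩
  rw [hquot, Finsupp.single_le_iff, Finsupp.tsub_apply, Nat.one_le_iff_ne_zero]
  exact Nat.sub_ne_zero_of_lt (indexExponent_apply_lt hj hp hagree hlt)

end IndexFamilies

/-- Lemma `lem1.8`(ii) (lexicographical projections): with `M₁ >_lex M₂` of common degree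
`s ≥ 3` agreeing in order `t`, and `l ∈ {1, …, s-t}` (0-indexed: `q ∈ {0, …, s-t-1}`),
the monomial `M₃ = (x_{i_{s-t}} / x_{j_l}) M₂` satisfies `M₃ >_lex M₂`,
`M₃ / gcd(M₃, M₂) = x_{i_{s-t}}`, and `M₃ / gcd(M₃, M₂) ∣ M₁ / gcd(M₁, M₂)`.
Monomials are encoded by their exponent vectors `d₁, d₂, d₃`; the quotient
`M / gcd(M, N)` is the monomial with exponent vector `dM - dN` (truncated subtraction)
and divisibility of monomials is `≤` of exponent vectors. -/
theorem lexicographical_projection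
    (n s : ℕ) (hs : 3 ≤ s) (i j : ℕ → Fin n) (hi : Monotone i) (hj : Monotone j)
    (hlex : lexLt (∑ k ∈ Finset.range s, Finsupp.single (j k) 1)
                  (∑ k ∈ Finset.range s, Finsupp.single (i k) 1))
    (t : ℕ) (ht : t ≤ s - 1) (hagree : AgreeOrder n s i j t)
    (q : ℕ) (hq : q ≤ s - t - 1) :
    lexLt (∑ k ∈ Finset.range s, Finsupp.single (j k) 1)
        ((∑ k ∈ Finset.range s, Finsupp.single (j k) 1)
          + Finsupp.single (i (s - t - 1)) 1 - Finsupp.single (j q) 1) ∧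
    ((∑ k ∈ Finset.range s, Finsupp.single (j k) 1)
          + Finsupp.single (i (s - t - 1)) 1 - Finsupp.single (j q) 1)
        - (∑ k ∈ Finset.range s, Finsupp.single (j k) 1)
      = Finsupp.single (i (s - t - 1)) 1 ∧
    ((∑ k ∈ Finset.range s, Finsupp.single (j k) 1)
          + Finsupp.single (i (s - t - 1)) 1 - Finsupp.single (j q) 1)
        - (∑ k ∈ Finset.range s, Finsupp.single (j k) 1)
      ≤ (∑ k ∈ Finset.range s, Finsupp.single (i k) 1)
        - (∑ k ∈ Finset.range s, Finsupp.single (j k) 1) := by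
  rw [lexLt_iff_toColex_lt] at hlex ⊢
  exact lexicographical_projection_general (hi.monotoneOn _) (hj.monotoneOn _) hlex
    (Finset.mem_range.2 (by omega)) (fun l hl hpl ↦ hagree.eq_of_lt hpl (Finset.mem_range.1 hl))
    hagree.ne (Finset.mem_range.2 (by omega)) hq
end
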